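/- Fix a > 0 and an integer k ≥ 1. For every ε > 0 there exists A > 0 such that for every α ≥ A there exist a finite sequence a = r₀ < r₁ < … < r_k ≤ a + ε and a twice continuously differentiable function u : [a, r_k] → ℝ with u(a) = 0, u'(a) = α, satisfying −𝓕(r, u''(r), u'(r)/r) = |u(r)|^{p−1}u(r) for all r ∈ (a, r_k), u(r_j) = 0 for all j = 0,…,k, and (−1)^{j−1} u(r) > 0 for all r ∈ (r_{j−1}, r_j) and all j = 1,…,k. (For large initial slope α, the solution of the Cauchy problem oscillates and completes k nodal intervals within (a, a+ε].) -/

import Mathlib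

open Real Set

/-- Uniform ellipticity of the radial form `𝓕(r, m, l)` of a uniformly elliptic operator. -/
def UnifElliptic (n : ℕ) (lam Lam : ℝ) (F : ℝ → ℝ → ℝ → ℝ) : Prop :=
  ∀ r : ℝ, 0 < r → ∀ m l s t : ℝ, 0 ≤ s → 0 ≤ t →
    lam * (s + ((n : ℝ) - 1) * t) ≤ F r (m + s) (l + t) - F r m l ∧
      F r (m + s) (l + t) - F r m l ≤ Lam * (s + ((n : ℝ) - 1) * t)

/-- The truncation of `x` to the interval `[lo, hi]`. -/
def clamp (lo hi x : ℝ) : ℝ := max lo (min hi x)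

lemma le_clamp (lo hi x : ℝ) : lo ≤ clamp lo hi x := le_max_left _ _

lemma clamp_le {lo hi : ℝ} (h : lo ≤ hi) (x : ℝ) : clamp lo hi x ≤ hi :=
  max_le h (min_le_left _ _)

lemma clamp_eq_self {lo hi x : ℝ} (h₁ : lo ≤ x) (h₂ : x ≤ hi) : clamp lo hi x = x := by
  rw [clamp, min_eq_right h₂, max_eq_right h₁]

lemma continuous_clamp (lo hi : ℝ) : Continuous (clamp lo hi) := by
  unfold clamp; fun_prop

lemma abs_clamp_sub_clamp_le (lo hi x y : ℝ) : |clamp lo hi x - clamp lo hi y| ≤ |x - y| := by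
  have h := ((LipschitzWith.id.const_min hi).const_max lo).dist_le_mul x y
  simpa [clamp, Real.dist_eq] using h

lemma abs_clamp_neg_le {B : ℝ} (hB : 0 ≤ B) (x : ℝ) : |clamp (-B) B x| ≤ B :=
  abs_le.2 ⟨le_clamp _ _ _, clamp_le (by linarith) _⟩

lemma sub_le_mul_sub_of_hasDerivAt_le {f f' : ℝ → ℝ} {x y C : ℝ} (hxy : x ≤ y)
    (hf : ∀ t ∈ Icc x y, HasDerivAt f (f' t) t) (hC : ∀ t ∈ Icc x y, f' t ≤ C) :
    f y - f x ≤ C * (y - x) := by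
  refine (convex_Icc x y).image_sub_le_mul_sub_of_deriv_le
    (fun t ht => (hf t ht).continuousAt.continuousWithinAt)
    (fun t ht => (hf t (interior_subset ht)).differentiableAt.differentiableWithinAt)
    (fun t ht => ?_) x (left_mem_Icc.2 hxy) y (right_mem_Icc.2 hxy) hxy
  rw [(hf t (interior_subset ht)).deriv]
  exact hC t (interior_subset ht)

lemma mul_sub_le_sub_of_le_hasDerivAt {f f' : ℝ → ℝ} {x y C : ℝ} (hxy : x ≤ y)
    (hf : ∀ t ∈ Icc x y, HasDerivAt f (f' t) t) (hC : ∀ t ∈ Icc x y, C ≤ f' t) :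
    C * (y - x) ≤ f y - f x := by
  have := sub_le_mul_sub_of_hasDerivAt_le (f := fun t => -f t) (f' := fun t => -f' t) (C := -C) hxy
    (fun t ht => (hf t ht).neg) (fun t ht => neg_le_neg (hC t ht))
  linarith

lemma exists_first_nonpos {w : ℝ → ℝ} {h S : ℝ} (hw : ContinuousOn w (Icc h S))
    (hh : 0 < w h) (hex : ∃ s ∈ Icc h S, w s ≤ 0) :
    ∃ s₁, h < s₁ ∧ s₁ ≤ S ∧ w s₁ = 0 ∧ ∀ s, h ≤ s → s < s₁ → 0 < w s := by
  have hcl : IsCompact (Icc h S ∩ w ⁻¹' Iic 0) :=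
    isCompact_Icc.of_isClosed_subset (hw.preimage_isClosed_of_isClosed isClosed_Icc isClosed_Iic)
      inter_subset_left
  obtain ⟨s₁, ⟨hs₁, hws₁⟩, hmin⟩ := hcl.exists_isLeast (let ⟨s, hs, h0⟩ := hex; ⟨s, hs, h0⟩)
  have hws₁' : w s₁ ≤ 0 := hws₁
  have hpos : ∀ s, h ≤ s → s < s₁ → 0 < w s := fun s h₁ h₂ => by
    by_contra hn
    exact absurd (hmin ⟨⟨h₁, h₂.le.trans hs₁.2⟩, not_lt.1 hn⟩) (not_le.2 h₂)
  have hlt : h < s₁ := lt_of_le_of_ne hs₁.1 (fun e => by rw [e] at hh; linarith)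
  refine ⟨s₁, hlt, hs₁.2, ?_, hpos⟩
  obtain ⟨z, hz, hz0⟩ := intermediate_value_Icc' hlt.le
    (hw.mono (Icc_subset_Icc_right hs₁.2)) ⟨hws₁', hh.le⟩
  rcases hz.2.lt_or_eq with h' | h'
  · exact absurd (hpos z hz.1 h') (by rw [hz0]; exact lt_irrefl _)
  · rwa [← h']

set_option maxHeartbeats 1000000 in
/-- A function starting from `0` with slope `1` which is uniformly concave where it is positive, up
to a small error, comes back to `0` in a controlled time, and with a controlled slope. -/
theorem exists_half_wave {p lam Lam : ℝ} (hp : 0 < p) (hlam : 0 < lam) (hLam : 0 < Lam) :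
    ∃ S R c τ : ℝ, 0 < S ∧ 0 < R ∧ 0 < c ∧ 0 < τ ∧ ∀ w v q : ℝ → ℝ, w 0 = 0 → v 0 = 1 →
      (∀ s ∈ Icc 0 S, HasDerivAt w (v s) s) → (∀ s ∈ Icc 0 S, HasDerivAt v (q s) s) →
      (∀ s ∈ Icc 0 S, -(clamp 0 R (w s)) ^ p / lam - τ ≤ q s) →
      (∀ s ∈ Icc 0 S, q s ≤ -(clamp 0 R (w s)) ^ p / Lam + τ) →
      ∃ s₁, 0 < s₁ ∧ s₁ ≤ S ∧ w s₁ = 0 ∧ (∀ s ∈ Ioo 0 s₁, 0 < w s) ∧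
        (∀ s ∈ Icc 0 s₁, 0 ≤ w s ∧ w s ≤ R ∧ |v s| ≤ R) ∧ v s₁ ≤ -c := by
  obtain ⟨L, hL⟩ : ∃ L, L = (2 : ℝ) ^ p / lam + 1 := ⟨_, rfl⟩
  have hL1 : 1 ≤ L := by
    have : 0 < (2 : ℝ) ^ p / lam := by positivity
    linarith
  obtain ⟨h, hh⟩ : ∃ h, h = 1 / (2 * L) := ⟨_, rfl⟩
  have hh0 : 0 < h := by rw [hh]; positivity
  have hLh : L * h = 1 / 2 := by rw [hh]; field_simp
  have hh1 : h ≤ 1 / 2 := by nlinarith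
  obtain ⟨b, hb⟩ : ∃ b, b = h / 4 := ⟨_, rfl⟩
  have hb0 : 0 < b := by rw [hb]; positivity
  obtain ⟨κ, hκ⟩ : ∃ κ, κ = b ^ p / Lam / 2 := ⟨_, rfl⟩
  have hκ0 : 0 < κ := by rw [hκ]; positivity
  obtain ⟨T₁, hT₁⟩ : ∃ T₁, T₁ = 3 / κ := ⟨_, rfl⟩
  have hT₁0 : 0 < T₁ := by rw [hT₁]; positivity
  have hκT : κ * T₁ = 3 := by rw [hT₁]; field_simp
  obtain ⟨T, hT⟩ : ∃ T, T = T₁ + (2 + 2 * T₁) := ⟨_, rfl⟩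
  have hT0 : 0 < T := by rw [hT]; positivity
  obtain ⟨S, hS⟩ : ∃ S, S = (h + T) + 4 * T * (h + T) / b + 1 := ⟨_, rfl⟩
  have hShT : h + T < S := by
    have : 0 < 4 * T * (h + T) / b := by positivity
    linarith
  have hS0 : 0 < S := by linarith
  obtain ⟨R, hR⟩ : ∃ R, R = 2 * S + S * ((2 * S) ^ p / lam + 1) + 2 := ⟨_, rfl⟩
  have hR2S : 2 * S + 2 ≤ R := by
    have : 0 < S * ((2 * S) ^ p / lam + 1) := by positivity
    linarith
  have hR0 : 0 < R := by linarith
  obtain ⟨τ, hτ0, hτ1, hτκ, hτT, hτS, hτb⟩ : ∃ τ, 0 < τ ∧ τ ≤ 1 ∧ τ ≤ κ ∧ τ * S ≤ b / (2 * T) ∧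
      τ * S ≤ 1 ∧ τ * S ≤ b / S := by
    refine ⟨min (min 1 κ) (min (b / (2 * T) / S) (min (1 / S) (b / S / S))), by positivity,
      ?_, ?_, ?_, ?_, ?_⟩
    · exact (min_le_left _ _).trans (min_le_left _ _)
    · exact (min_le_left _ _).trans (min_le_right _ _)
    · rw [← le_div_iff₀ hS0]
      exact (min_le_right _ _).trans (min_le_left _ _)
    · rw [← le_div_iff₀ hS0]
      exact ((min_le_right _ _).trans (min_le_right _ _)).trans (min_le_left _ _)
    · rw [← le_div_iff₀ hS0]
      exact ((min_le_right _ _).trans (min_le_right _ _)).trans (min_le_right _ _)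
  refine ⟨S, R, b / S, τ, hS0, hR0, by positivity, hτ0, ?_⟩
  intro w v q hw0 hv0 hw hv hlow hup
  have hcl0 : ∀ x, 0 ≤ (clamp 0 R x) ^ p := fun x => rpow_nonneg (le_clamp 0 R x) p
  -- the slope increases by at most `τ` per unit time
  have hqτ : ∀ s ∈ Icc 0 S, q s ≤ τ := fun s hs => by
    have h1 := hup s hs
    have h2 : 0 ≤ (clamp 0 R (w s)) ^ p / Lam := div_nonneg (hcl0 _) hLam.le
    rw [neg_div] at h1
    linarith
  have hvinc : ∀ x y, 0 ≤ x → x ≤ y → y ≤ S → v y ≤ v x + τ * S := fun x y hx hxy hy => by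
    have := sub_le_mul_sub_of_hasDerivAt_le hxy
      (fun t ht => hv t ⟨hx.trans ht.1, ht.2.trans hy⟩)
      (fun t ht => hqτ t ⟨hx.trans ht.1, ht.2.trans hy⟩)
    have h2 : τ * (y - x) ≤ τ * S := by gcongr; linarith
    linarith
  have hv2 : ∀ s ∈ Icc 0 S, v s ≤ 2 := fun s hs => by
    have := hvinc 0 s le_rfl hs.1 hs.2
    linarith
  have hw2 : ∀ s ∈ Icc 0 S, w s ≤ 2 * s := fun s hs => by
    have := sub_le_mul_sub_of_hasDerivAt_le hs.1
      (fun t ht => hw t ⟨ht.1, ht.2.trans hs.2⟩) (fun t ht => hv2 t ⟨ht.1, ht.2.trans hs.2⟩)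
    linarith
  have hcl2 : ∀ s ∈ Icc 0 S, clamp 0 R (w s) ≤ 2 * s := fun s hs =>
    max_le (by linarith [hs.1]) ((min_le_right _ _).trans (hw2 s hs))
  -- lower bound on the slope
  have hvlow : ∀ s ∈ Icc 0 S, 1 - ((2 * s) ^ p / lam + 1) * s ≤ v s := fun s hs => by
    have := mul_sub_le_sub_of_le_hasDerivAt (C := -((2 * s) ^ p / lam + 1)) hs.1
      (fun t ht => hv t ⟨ht.1, ht.2.trans hs.2⟩) (fun t ht => ?_)
    · linarith
    · have ht' : t ∈ Icc 0 S := ⟨ht.1, ht.2.trans hs.2⟩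
      have h1 := hlow t ht'
      have h2 : (clamp 0 R (w t)) ^ p / lam ≤ (2 * s) ^ p / lam := by
        have := (hcl2 t ht').trans (by linarith [ht.2] : 2 * t ≤ 2 * s)
        have := rpow_le_rpow (le_clamp 0 R (w t)) this hp.le
        gcongr
      rw [neg_div] at h1
      linarith
  have hvhalf : ∀ s ∈ Icc 0 h, 1 / 2 ≤ v s := fun s hs => by
    refine le_trans ?_ (hvlow s ⟨hs.1, by linarith [hs.2]⟩)
    have h1 : (2 * s) ^ p / lam + 1 ≤ L := by
      have := rpow_le_rpow (by linarith [hs.1] : 0 ≤ 2 * s)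
        (by linarith [hs.2] : 2 * s ≤ 2) hp.le
      rw [hL]; gcongr
    have h2 : ((2 * s) ^ p / lam + 1) * s ≤ L * h := by
      have := hs.1
      have := hs.2
      gcongr
    linarith
  have hwinit : ∀ s ∈ Icc 0 h, s / 2 ≤ w s := fun s hs => by
    have := mul_sub_le_sub_of_le_hasDerivAt hs.1
      (fun t ht => hw t ⟨ht.1, by linarith [ht.2, hs.2]⟩)
      (fun t ht => hvhalf t ⟨ht.1, ht.2.trans hs.2⟩)
    linarith
  have hwh : 2 * b ≤ w h := by
    have := hwinit h ⟨hh0.le, le_rfl⟩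
    linarith
  -- the solution drops below `b`
  obtain ⟨s₂, hs₂, hws₂⟩ : ∃ s ∈ Icc h (h + T), w s < b := by
    by_contra! hcon
    have hqκ : ∀ s ∈ Icc h (h + T), q s ≤ -κ := fun s hs => by
      have hs' : s ∈ Icc 0 S := ⟨by linarith [hs.1], by linarith [hs.2]⟩
      have h1 := hup s hs'
      have h3 : b ≤ clamp 0 R (w s) := by
        rw [clamp_eq_self (by linarith [hcon s hs]) (by linarith [hw2 s hs', hs'.2])]
        exact hcon s hs
      have h2 : b ^ p / Lam ≤ (clamp 0 R (w s)) ^ p / Lam := by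
        have := rpow_le_rpow hb0.le h3 hp.le
        gcongr
      rw [neg_div] at h1
      linarith
    have hvneg : ∀ s ∈ Icc (h + T₁) (h + T), v s ≤ -1 := fun s hs => by
      have h0 : h ≤ s := by linarith [hs.1]
      have := sub_le_mul_sub_of_hasDerivAt_le h0
        (fun t ht => hv t ⟨by linarith [ht.1], by linarith [ht.2, hs.2]⟩)
        (fun t ht => hqκ t ⟨ht.1, ht.2.trans hs.2⟩)
      have h2 := hv2 h ⟨hh0.le, by linarith⟩
      have h3 : κ * T₁ ≤ κ * (s - h) := by gcongr; linarith [hs.1]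
      linarith
    have h1 := sub_le_mul_sub_of_hasDerivAt_le (by linarith : h + T₁ ≤ h + T)
        (fun t ht => hw t ⟨by linarith [ht.1], by linarith [ht.2]⟩) hvneg
    have h2 := hw2 (h + T₁) ⟨by linarith, by linarith⟩
    have h3 := hcon (h + T) ⟨by linarith, le_rfl⟩
    linarith
  have hhs₂ : h < s₂ := lt_of_le_of_ne hs₂.1 (fun e => by rw [← e] at hws₂; linarith)
  have hwcont : ContinuousOn w (Icc 0 S) := fun t ht => (hw t ht).continuousAt.continuousWithinAt
  obtain ⟨ξ, hξ, hvξ⟩ := exists_hasDerivAt_eq_slope w v hhs₂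
    (hwcont.mono (Icc_subset_Icc hh0.le (by linarith [hs₂.2])))
    (fun t ht => hw t ⟨by linarith [ht.1], by linarith [ht.2, hs₂.2]⟩)
  have hvξ' : v ξ ≤ -(b / T) := by
    rw [hvξ, ← neg_div, div_le_div_iff₀ (by linarith) hT0]
    nlinarith [hs₂.2]
  have hwS : ∃ s ∈ Icc h S, w s ≤ 0 := by
    refine ⟨S, ⟨by linarith, le_rfl⟩, ?_⟩
    have hξS : ξ ≤ S := by linarith [hξ.2, hs₂.2]
    have h1 := sub_le_mul_sub_of_hasDerivAt_le (C := -(b / (2 * T))) hξS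
      (fun t ht => hw t ⟨by linarith [ht.1, hξ.1], ht.2⟩) (fun t ht => by
        have := hvinc ξ t (by linarith [hξ.1]) ht.1 ht.2
        have e : b / T = 2 * (b / (2 * T)) := by field_simp
        linarith)
    have h2 := hw2 ξ ⟨by linarith [hξ.1], hξS⟩
    have h3 : b / (2 * T) * (4 * T * (h + T) / b) ≤ b / (2 * T) * (S - ξ) := by
      gcongr; linarith [hξ.2, hs₂.2]
    have h4 : b / (2 * T) * (4 * T * (h + T) / b) = 2 * (h + T) := by field_simp; ring
    linarith [hξ.2, hs₂.2]
  obtain ⟨s₁, hhs₁, hs₁S, hws₁, hpos⟩ := exists_first_nonpos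
    (hwcont.mono (Icc_subset_Icc_left hh0.le)) (by linarith) hwS
  have hpos' : ∀ s ∈ Ioo 0 s₁, 0 < w s := fun s hs => by
    rcases le_total h s with h' | h'
    · exact hpos s h' hs.2
    · linarith [hwinit s ⟨hs.1.le, h'⟩, hs.1]
  refine ⟨s₁, hh0.trans hhs₁, hs₁S, hws₁, hpos', fun s hs => ⟨?_, ?_, ?_⟩, ?_⟩
  · rcases hs.1.eq_or_lt with h' | h'
    · rw [← h', hw0]
    · rcases hs.2.eq_or_lt with h'' | h''
      · rw [h'', hws₁]
      · exact (hpos' s ⟨h', h''⟩).le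
  · linarith [hw2 s ⟨hs.1, hs.2.trans hs₁S⟩, hs.2]
  · have hs' : s ∈ Icc 0 S := ⟨hs.1, hs.2.trans hs₁S⟩
    rw [abs_le]
    refine ⟨?_, by linarith [hv2 s hs']⟩
    have h1 := hvlow s hs'
    have h2 : ((2 * s) ^ p / lam + 1) * s ≤ ((2 * S) ^ p / lam + 1) * S := by
      have := hs'.1
      have := hs'.2
      have := rpow_le_rpow (by linarith : 0 ≤ 2 * s) (by linarith : 2 * s ≤ 2 * S) hp.le
      gcongr
    linarith
  · obtain ⟨ζ, hζ, hvζ⟩ := exists_hasDerivAt_eq_slope w v hhs₁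
      (hwcont.mono (Icc_subset_Icc hh0.le hs₁S))
      (fun t ht => hw t ⟨by linarith [ht.1], by linarith [ht.2]⟩)
    have h1 : v ζ ≤ -(2 * b / S) := by
      rw [hvζ, hws₁, ← neg_div, div_le_div_iff₀ (by linarith) hS0]
      nlinarith
    have h2 := hvinc ζ s₁ (by linarith [hζ.1]) hζ.2.le hs₁S
    have e : 2 * b / S = b / S + b / S := by ring
    linarith

/-- Global solvability on `[0, S]` of a second order Cauchy problem whose right-hand side is bounded
and globally Lipschitz. -/
theorem exists_second_order_solution {G : ℝ → ℝ → ℝ → ℝ} {B K S : ℝ} (hS : 0 < S) (hK : 0 ≤ K)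
    (hcont : ∀ x v, Continuous fun t => G t x v) (hB : ∀ t x v, |G t x v| ≤ B)
    (hL : ∀ t x v x' v', |G t x v - G t x' v'| ≤ K * (|x - x'| + |v - v'|)) (v₀ : ℝ) :
    ∃ w v : ℝ → ℝ, w 0 = 0 ∧ v 0 = v₀ ∧ (∀ s ∈ Icc 0 S, HasDerivAt w (v s) s) ∧
      ∀ s ∈ Icc 0 S, HasDerivAt v (G s (w s) (v s)) s := by
  have hB0 : 0 ≤ B := (abs_nonneg _).trans (hB 0 0 0)
  obtain ⟨C, hC⟩ : ∃ C, C = |v₀| + B * (S + 1) := ⟨_, rfl⟩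
  have hC0 : 0 ≤ C := by rw [hC]; positivity
  let f : ℝ → ℝ × ℝ → ℝ × ℝ := fun t z => (clamp (-C) C z.2, G t z.1 z.2)
  have hPL : IsPicardLindelof f (tmin := -1) (tmax := S + 1) ⟨0, by constructor <;> linarith⟩
      ((0, v₀) : ℝ × ℝ) (((C + B) * (S + 1)).toNNReal) 0 ((C + B).toNNReal)
      ((1 + 2 * K).toNNReal) := by
    refine ⟨fun t _ => LipschitzOnWith.of_dist_le_mul fun z _ z' _ => ?_, fun z _ => ?_,
      fun t _ z _ => ?_, ?_⟩
    · rw [Real.coe_toNNReal _ (by linarith), Prod.dist_eq, Prod.dist_eq, Real.dist_eq, Real.dist_eq,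
        Real.dist_eq, Real.dist_eq]
      have h1 : |z.1 - z'.1| ≤ max |z.1 - z'.1| |z.2 - z'.2| := le_max_left _ _
      have h2 : |z.2 - z'.2| ≤ max |z.1 - z'.1| |z.2 - z'.2| := le_max_right _ _
      have h0 : 0 ≤ max |z.1 - z'.1| |z.2 - z'.2| := (abs_nonneg _).trans h1
      refine max_le ?_ ?_
      · refine (abs_clamp_sub_clamp_le (-C) C z.2 z'.2).trans (h2.trans ?_)
        nlinarith
      · refine (hL t z.1 z.2 z'.1 z'.2).trans ?_
        nlinarith
    · exact (continuous_const.prodMk (hcont z.1 z.2)).continuousOn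
    · rw [Real.coe_toNNReal _ (by linarith), Prod.norm_def]
      refine max_le ?_ ?_
      · exact (abs_clamp_neg_le hC0 _).trans (by linarith)
      · exact (hB _ _ _).trans (by linarith)
    · rw [Real.coe_toNNReal _ (by linarith), Real.coe_toNNReal _ (by positivity)]
      rw [max_eq_left (by simp; linarith)]
      simp
  obtain ⟨α, hα0, hα⟩ := hPL.exists_eq_forall_mem_Icc_hasDerivWithinAt₀
  have hα' : ∀ s ∈ Icc 0 S, HasDerivAt α (f s (α s)) s := fun s hs =>
    (hα s ⟨by linarith [hs.1], by linarith [hs.2]⟩).hasDerivAt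
      (Icc_mem_nhds (by linarith [hs.1]) (by linarith [hs.2]))
  have hα0 : α 0 = (0, v₀) := hα0
  have hv : ∀ s ∈ Icc 0 S, HasDerivAt (fun t => (α t).2) (G s (α s).1 (α s).2) s := fun s hs =>
    (hasFDerivAt_snd (𝕜 := ℝ) (p := α s)).comp_hasDerivAt s (hα' s hs)
  refine ⟨fun t => (α t).1, fun t => (α t).2, by simp [hα0], by simp [hα0], fun s hs => ?_, hv⟩
  have hw : HasDerivAt (fun t => (α t).1) (clamp (-C) C (α s).2) s :=
    (hasFDerivAt_fst (𝕜 := ℝ) (p := α s)).comp_hasDerivAt s (hα' s hs)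
  have hmem : ∀ t ∈ Icc 0 s, t ∈ Icc 0 S := fun t ht => ⟨ht.1, ht.2.trans hs.2⟩
  have h1 := sub_le_mul_sub_of_hasDerivAt_le hs.1 (fun t ht => hv t (hmem t ht))
    (fun t _ => (abs_le.1 (hB t (α t).1 (α t).2)).2)
  have h2 := mul_sub_le_sub_of_le_hasDerivAt hs.1 (fun t ht => hv t (hmem t ht))
    (fun t _ => (abs_le.1 (hB t (α t).1 (α t).2)).1)
  simp only [hα0, sub_zero] at h1 h2
  have h3 : B * s ≤ B * (S + 1) := by gcongr; linarith [hs.2]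
  have h4 := abs_le.1 (le_refl |v₀|)
  rwa [clamp_eq_self (by linarith) (by linarith)] at hw

/-- The structural properties of the normal form `u'' = g(r, |u|^{p-1}u, u')` of the radial
equation. -/
structure IsNormalForm (lam Lam K C : ℝ) (g : ℝ → ℝ → ℝ → ℝ) : Prop where
  continuous : Continuous fun x : ℝ × ℝ × ℝ => g x.1 x.2.1 x.2.2
  lipschitz : ∀ r y v y' v', |g r y v - g r y' v'| ≤ C * (|y - y'| + |v - v'|)
  le : ∀ σ : ℝ, σ = 1 ∨ σ = -1 → ∀ r y v, 0 ≤ y → -y / lam - K * |v| ≤ σ * g r (σ * y) v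
  ge : ∀ σ : ℝ, σ = 1 ∨ σ = -1 → ∀ r y v, 0 ≤ y → σ * g r (σ * y) v ≤ -y / Lam + K * |v|

lemma two_slope_bounds {lam Lam m D y E : ℝ} (hlam : 0 < lam) (hlL : lam ≤ Lam)
    (hpos : 0 ≤ m → lam * m ≤ D ∧ D ≤ Lam * m) (hneg : m ≤ 0 → Lam * m ≤ D ∧ D ≤ lam * m)
    (hy : 0 ≤ y) (hE : 0 ≤ E) (h₁ : -y - E ≤ D) (h₂ : D ≤ -y + E) :
    -y / lam - E / lam ≤ m ∧ m ≤ -y / Lam + E / lam := by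
  have hLam : 0 < Lam := hlam.trans_le hlL
  have hyl : y / Lam ≤ y / lam := by gcongr
  have hEl : E / Lam ≤ E / lam := by gcongr
  rw [neg_div, neg_div]
  rcases le_total 0 m with hm | hm
  · obtain ⟨h3, h4⟩ := hpos hm
    constructor
    · have : 0 ≤ y / lam + E / lam := by positivity
      linarith
    · have : m ≤ (-y + E) / lam := by rw [le_div_iff₀ hlam]; linarith
      rw [add_div, neg_div] at this
      linarith
  · obtain ⟨h3, h4⟩ := hneg hm
    constructor
    · have : (-y - E) / lam ≤ m := by rw [div_le_iff₀ hlam]; linarith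
      rw [sub_div, neg_div] at this
      linarith
    · have : m ≤ (-y + E) / Lam := by rw [le_div_iff₀ hLam]; linarith
      rw [add_div, neg_div] at this
      linarith

section Elliptic

variable {n : ℕ} {lam Lam : ℝ} {F : ℝ → ℝ → ℝ → ℝ}

lemma UnifElliptic.sub_bounds (hF : UnifElliptic n lam Lam F) {r : ℝ} (hr : 0 < r) {m m' : ℝ}
    (h : m' ≤ m) (l : ℝ) :
    lam * (m - m') ≤ F r m l - F r m' l ∧ F r m l - F r m' l ≤ Lam * (m - m') := by
  have := hF r hr m' l (m - m') 0 (by linarith) le_rfl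
  simpa using this

lemma UnifElliptic.mul_abs_sub_le (hF : UnifElliptic n lam Lam F) {r : ℝ} (hr : 0 < r)
    (m m' l : ℝ) : lam * |m - m'| ≤ |F r m l - F r m' l| := by
  rcases le_total m' m with h | h
  · rw [abs_of_nonneg (sub_nonneg.2 h)]
    exact (hF.sub_bounds hr h l).1.trans (le_abs_self _)
  · rw [abs_sub_comm, abs_of_nonneg (sub_nonneg.2 h), abs_sub_comm]
    exact (hF.sub_bounds hr h l).1.trans (le_abs_self _)

lemma UnifElliptic.abs_sub_le (hF : UnifElliptic n lam Lam F) (hlam : 0 < lam) (hn : 1 ≤ n)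
    {r : ℝ} (hr : 0 < r) (m l l' : ℝ) :
    |F r m l - F r m l'| ≤ Lam * ((n : ℝ) - 1) * |l - l'| := by
  have hn' : (0 : ℝ) ≤ (n : ℝ) - 1 := by
    have : (1 : ℝ) ≤ n := by exact_mod_cast hn
    linarith
  have key : ∀ l l' : ℝ, l' ≤ l → |F r m l - F r m l'| ≤ Lam * ((n : ℝ) - 1) * |l - l'| := by
    intro l l' h
    obtain ⟨h1, h2⟩ := hF r hr m l' 0 (l - l') le_rfl (by linarith)
    simp only [add_zero, zero_add, add_sub_cancel] at h1 h2
    have h3 : 0 ≤ lam * (((n : ℝ) - 1) * (l - l')) :=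
      mul_nonneg hlam.le (mul_nonneg hn' (by linarith))
    rw [abs_of_nonneg (h3.trans h1), abs_of_nonneg (sub_nonneg.2 h)]
    linarith
  rcases le_total l' l with h | h
  · exact key l l' h
  · rw [abs_sub_comm, abs_sub_comm l]
    exact key l' l h

lemma UnifElliptic.exists_eq (hF : UnifElliptic n lam Lam F) (hlam : 0 < lam) {r : ℝ} (hr : 0 < r)
    (hc : Continuous fun x : ℝ × ℝ × ℝ => F x.1 x.2.1 x.2.2) (l y : ℝ) : ∃ m, F r m l = y := by
  have hcont : Continuous fun m => F r m l :=
    hc.comp (continuous_const.prodMk (continuous_id.prodMk continuous_const))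
  set D := |y - F r 0 l| / lam with hD
  have hD0 : 0 ≤ D := by positivity
  have hDl : lam * D = |y - F r 0 l| := by rw [hD]; field_simp
  have h1 := (hF.sub_bounds hr hD0 l).1
  have h2 := (hF.sub_bounds hr (neg_nonpos.2 hD0) l).1
  have h3 := abs_le.1 (le_refl |y - F r 0 l|)
  obtain ⟨m, -, hm⟩ := intermediate_value_Icc (by linarith : -D ≤ D) hcont.continuousOn
    (⟨by linarith, by linarith⟩ : y ∈ Icc (F r (-D) l) (F r D l))
  exact ⟨m, hm⟩

/-- The radial equation can be solved for the second derivative. -/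
theorem UnifElliptic.exists_isNormalForm (hF : UnifElliptic n lam Lam F) (hn : 1 ≤ n)
    (hlam : 0 < lam) (hlL : lam ≤ Lam) (hc : Continuous fun x : ℝ × ℝ × ℝ => F x.1 x.2.1 x.2.2)
    (hF0 : ∀ r, F r 0 0 = 0) {a : ℝ} (ha : 0 < a) :
    ∃ (K C : ℝ) (g : ℝ → ℝ → ℝ → ℝ), 0 ≤ K ∧ 0 ≤ C ∧ IsNormalForm lam Lam K C g ∧
      ∀ r y v, a ≤ r → F r (g r y v) (v / r) = -y := by
  have hn' : (0 : ℝ) ≤ (n : ℝ) - 1 := by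
    have : (1 : ℝ) ≤ n := by exact_mod_cast hn
    linarith
  have hLam : 0 < Lam := hlam.trans_le hlL
  have hρ : ∀ r : ℝ, 0 < max r a := fun r => lt_max_of_lt_right ha
  choose g hg using fun r y v : ℝ => hF.exists_eq hlam (hρ r) hc (v / max r a) (-y)
  set N := Lam * ((n : ℝ) - 1) / a with hN
  have hN0 : 0 ≤ N := by positivity
  have hl : ∀ r m v v', |F (max r a) m (v / max r a) - F (max r a) m (v' / max r a)|
      ≤ N * |v - v'| := fun r m v v' => by
    refine (hF.abs_sub_le hlam hn (hρ r) m _ _).trans ?_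
    rw [← sub_div, abs_div, abs_of_pos (hρ r), hN, div_mul_eq_mul_div, ← mul_div_assoc]
    gcongr
    exact le_max_right _ _
  have hbounds : ∀ σ : ℝ, σ = 1 ∨ σ = -1 → ∀ r y v, 0 ≤ y →
      -y / lam - N * |v| / lam ≤ σ * g r (σ * y) v ∧
        σ * g r (σ * y) v ≤ -y / Lam + N * |v| / lam := by
    intro σ hσ r y v hy
    have hb := hl r 0 v 0
    rw [zero_div, hF0, sub_zero, sub_zero, abs_le] at hb
    have hE := hg r (σ * y) v
    have h1 : 0 ≤ g r (σ * y) v → _ := fun h => hF.sub_bounds (hρ r) h (v / max r a)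
    have h2 : g r (σ * y) v ≤ 0 → _ := fun h => hF.sub_bounds (hρ r) h (v / max r a)
    refine two_slope_bounds (D := σ * (F (max r a) (g r (σ * y) v) (v / max r a)
      - F (max r a) 0 (v / max r a))) hlam hlL ?_ ?_ hy (by positivity) ?_ ?_
    · rcases hσ with rfl | rfl
      · intro h
        have := h1 (by linarith)
        constructor <;> linarith
      · intro h
        have := h2 (by linarith)
        constructor <;> linarith
    · rcases hσ with rfl | rfl
      · intro h
        have := h2 (by linarith)
        constructor <;> linarith
      · intro h
        have := h1 (by linarith)
        constructor <;> linarith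
    · rw [hE]
      rcases hσ with rfl | rfl <;> linarith
    · rw [hE]
      rcases hσ with rfl | rfl <;> linarith
  refine ⟨N / lam, (1 + N) / lam, g, by positivity, by positivity, ⟨?_, ?_, ?_, ?_⟩, ?_⟩
  · rw [continuous_iff_continuousAt]
    rintro ⟨r₀, y₀, v₀⟩
    set m₀ := g r₀ y₀ v₀ with hm₀
    have hcomp : Continuous fun x : ℝ × ℝ × ℝ =>
        |-x.2.1 - F (max x.1 a) m₀ (x.2.2 / max x.1 a)| / lam := by
      have : Continuous fun x : ℝ × ℝ × ℝ => (max x.1 a, m₀, x.2.2 / max x.1 a) := by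
        refine (by fun_prop : Continuous fun x : ℝ × ℝ × ℝ => max x.1 a).prodMk
          (continuous_const.prodMk ?_)
        exact (by fun_prop : Continuous fun x : ℝ × ℝ × ℝ => x.2.2).div (by fun_prop)
          (fun x => (hρ x.1).ne')
      have h2 := hc.comp this
      exact ((continuous_snd.fst.neg.sub h2).abs).div_const lam
    have h0 := hcomp.tendsto (r₀, y₀, v₀)
    have hz : |-y₀ - F (max r₀ a) m₀ (v₀ / max r₀ a)| / lam = 0 := by
      rw [hm₀, hg]; simp
    simp only [hz] at h0
    rw [ContinuousAt, tendsto_iff_dist_tendsto_zero]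
    refine squeeze_zero (fun _ => dist_nonneg) (fun x => ?_) h0
    rw [Real.dist_eq, le_div_iff₀ hlam, mul_comm, ← hg x.1 x.2.1 x.2.2]
    exact hF.mul_abs_sub_le (hρ x.1) _ _ _
  · intro r y v y' v'
    rw [div_mul_eq_mul_div, le_div_iff₀ hlam, mul_comm]
    refine (hF.mul_abs_sub_le (hρ r) _ _ (v / max r a)).trans ?_
    have h1 := hl r (g r y' v') v v'
    have h2 : F (max r a) (g r y v) (v / max r a) - F (max r a) (g r y' v') (v / max r a)
        = -(y - y') - (F (max r a) (g r y' v') (v / max r a)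
          - F (max r a) (g r y' v') (v' / max r a)) := by
      rw [hg, hg]; ring
    rw [h2]
    refine (abs_sub _ _).trans ?_
    rw [abs_neg]
    nlinarith [abs_nonneg (y - y'), abs_nonneg (v - v')]
  · intro σ hσ r y v hy
    rw [div_mul_eq_mul_div]
    exact (hbounds σ hσ r y v hy).1
  · intro σ hσ r y v hy
    rw [div_mul_eq_mul_div]
    exact (hbounds σ hσ r y v hy).2
  · intro r y v hr
    have := hg r y v
    rwa [max_eq_left hr] at this

end Elliptic

lemma abs_rpow_sub_rpow_le {p R x y : ℝ} (hp : 1 ≤ p) (hx : x ∈ Icc 0 R) (hy : y ∈ Icc 0 R) :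
    |x ^ p - y ^ p| ≤ p * R ^ (p - 1) * |x - y| := by
  refine (convex_Icc 0 R).norm_image_sub_le_of_norm_hasDerivWithin_le
    (fun t _ => (Real.hasDerivAt_rpow_const (Or.inr hp)).hasDerivWithinAt) (fun t ht => ?_) hy hx
  rw [norm_of_nonneg (mul_nonneg (by linarith) (rpow_nonneg ht.1 _))]
  exact mul_le_mul_of_nonneg_left (rpow_le_rpow ht.1 ht.2 (by linarith)) (by linarith)

lemma abs_rpow_mul_self_of_sign {p σ M x : ℝ} (hp : p ≠ 0) (hσ : σ = 1 ∨ σ = -1) (hM : 0 < M)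
    (hx : 0 ≤ x) : |σ * M * x| ^ (p - 1) * (σ * M * x) = σ * (M ^ p * x ^ p) := by
  rcases hx.eq_or_lt with rfl | hx
  · simp [zero_rpow hp]
  · have hpos : 0 < M * x := by positivity
    have habs : |σ * M * x| = M * x := by
      rcases hσ with rfl | rfl <;> simp [abs_of_pos hM, abs_of_pos hx]
    rw [habs, ← mul_rpow hM.le hx.le, rpow_sub_one hpos.ne']
    field_simp

lemma hasDerivAt_ite_le {f₁ f₂ : ℝ → ℝ} {d r r₁ : ℝ} (h₁ : r ≤ r₁ → HasDerivAt f₁ d r)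
    (h₂ : r₁ ≤ r → HasDerivAt f₂ d r) (heq : f₁ r₁ = f₂ r₁) :
    HasDerivAt (fun t => if t ≤ r₁ then f₁ t else f₂ t) d r := by
  rcases lt_trichotomy r r₁ with h | h | h
  · refine (h₁ h.le).congr_of_eventuallyEq ?_
    filter_upwards [Iio_mem_nhds h] with t ht using if_pos (le_of_lt ht)
  · subst h
    have hl : HasDerivWithinAt (fun t => if t ≤ r then f₁ t else f₂ t) d (Iic r) r :=
      (h₁ le_rfl).hasDerivWithinAt.congr (fun t ht => if_pos ht) (if_pos le_rfl)
    have hr : HasDerivWithinAt (fun t => if t ≤ r then f₁ t else f₂ t) d (Ici r) r := by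
      refine (h₂ le_rfl).hasDerivWithinAt.congr (fun t ht => ?_) (by rw [if_pos le_rfl, heq])
      rcases (mem_Ici.1 ht).eq_or_lt with rfl | h'
      · rw [if_pos le_rfl, heq]
      · exact if_neg (not_le.2 h')
    have := hl.union hr
    rwa [Iic_union_Ici, hasDerivWithinAt_univ] at this
  · refine (h₂ h.le).congr_of_eventuallyEq ?_
    filter_upwards [Ioi_mem_nhds h] with t ht using if_neg (not_le.2 ht)

/-- The time scale `δ` attached to a large initial slope `α`. -/
lemma exists_time_scale {p : ℝ} (hp : 1 < p) {η : ℝ} (hη : 0 < η) :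
    ∃ A, 0 < A ∧ ∀ α, A ≤ α → ∃ δ, 0 < δ ∧ δ ≤ η ∧ δ * (α * δ) ^ p = α := by
  have hlim := tendsto_rpow_neg_atTop (y := (p - 1) / (p + 1)) (by apply div_pos <;> linarith)
  obtain ⟨A, hA⟩ := Filter.eventually_atTop.1 (hlim.eventually (Iic_mem_nhds hη))
  refine ⟨max A 1, by positivity, fun α hα => ?_⟩
  have hα0 : 0 < α := lt_of_lt_of_le one_pos ((le_max_right A 1).trans hα)
  refine ⟨α ^ (-((p - 1) / (p + 1))), by positivity, hA α ((le_max_left A 1).trans hα), ?_⟩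
  have hne : 1 + -((p - 1) / (p + 1)) ≠ 0 := by
    rw [← sub_eq_add_neg, sub_ne_zero]
    intro h
    field_simp at h
    linarith
  rw [← rpow_one_add' hα0.le hne, ← rpow_mul hα0.le, ← rpow_add hα0]
  conv_rhs => rw [← rpow_one α]
  congr 1
  have : p + 1 ≠ 0 := by linarith
  field_simp
  ring

/-- For a large initial slope `α` at `r₀`, the solution of the Cauchy problem completes a nodal
interval within `(r₀, r₀ + ε]`, and its slope at the end is comparable to `α`. -/
theorem IsNormalForm.exists_nodal_interval {lam Lam K C p : ℝ} {g : ℝ → ℝ → ℝ → ℝ}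
    (hg : IsNormalForm lam Lam K C g) (hp : 1 < p) (hlam : 0 < lam) (hLam : 0 < Lam)
    (hK : 0 ≤ K) (hC : 0 ≤ C) :
    ∃ c, 0 < c ∧ ∀ ε, 0 < ε → ∃ A, 0 < A ∧ ∀ r₀ σ α : ℝ, σ = 1 ∨ σ = -1 → A ≤ α →
      ∃ (u u' : ℝ → ℝ) (r₁ β : ℝ), r₀ < r₁ ∧ r₁ ≤ r₀ + ε ∧ u r₀ = 0 ∧ u' r₀ = σ * α ∧
        (∀ r ∈ Icc r₀ r₁, HasDerivAt u (u' r) r) ∧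
        (∀ r ∈ Icc r₀ r₁, HasDerivAt u' (g r (|u r| ^ (p - 1) * u r) (u' r)) r) ∧
        u r₁ = 0 ∧ (∀ r ∈ Ioo r₀ r₁, 0 < σ * u r) ∧ c * α ≤ β ∧ u' r₁ = -σ * β := by
  have hp0 : 0 < p := by linarith
  obtain ⟨S, R, c, τ, hS, hR, hc, hτ, hwave⟩ := exists_half_wave hp0 hlam hLam
  refine ⟨c, hc, fun ε hε => ?_⟩
  obtain ⟨A, hA, hscale⟩ := exists_time_scale hp
    (η := min (ε / S) (τ / (K * R + 1))) (by positivity)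
  refine ⟨A, hA, fun r₀ σ α hσ hα => ?_⟩
  obtain ⟨δ, hδ, hδη, hδα⟩ := hscale α hα
  have hα0 : 0 < α := hA.trans_le hα
  have hσ2 : σ * σ = 1 := by rcases hσ with rfl | rfl <;> norm_num
  have hσabs : |σ| = 1 := by rcases hσ with rfl | rfl <;> norm_num
  have hδS : δ * S ≤ ε := by
    rw [← le_div_iff₀ hS]
    exact hδη.trans (min_le_left _ _)
  have hδτ : K * δ * R ≤ τ := by
    have := hδη.trans (min_le_right _ _)
    rw [le_div_iff₀ (by positivity)] at this
    linarith
  obtain ⟨P, hP⟩ : ∃ P, P = (α * δ) ^ p := ⟨_, rfl⟩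
  have hP0 : 0 < P := by rw [hP]; positivity
  rw [← hP] at hδα
  have hδP : δ / α * P = 1 := by rw [div_mul_eq_mul_div, hδα, div_self hα0.ne']
  let G : ℝ → ℝ → ℝ → ℝ := fun s x v =>
    σ * (δ / α) * g (r₀ + δ * s) (σ * (P * clamp 0 R x ^ p)) (σ * α * clamp (-R) R v)
  have hcl0 : ∀ x, 0 ≤ clamp 0 R x ^ p := fun x => rpow_nonneg (le_clamp 0 R x) p
  have hclR : ∀ x, clamp 0 R x ^ p ≤ R ^ p := fun x =>
    rpow_le_rpow (le_clamp 0 R x) (clamp_le hR.le x) hp0.le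
  have hdrift : ∀ v, δ / α * (K * |σ * α * clamp (-R) R v|) ≤ τ := fun v => by
    rw [abs_mul, abs_mul, hσabs, abs_of_pos hα0]
    have : δ / α * (K * (1 * α * |clamp (-R) R v|)) = K * δ * |clamp (-R) R v| := by
      field_simp
    rw [this]
    exact (mul_le_mul_of_nonneg_left (abs_clamp_neg_le hR.le v) (by positivity)).trans hδτ
  have hGlow : ∀ s x v, -clamp 0 R x ^ p / lam - τ ≤ G s x v := fun s x v => by
    have h1 := mul_le_mul_of_nonneg_left (hg.le σ hσ (r₀ + δ * s) (P * clamp 0 R x ^ p)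
      (σ * α * clamp (-R) R v) (mul_nonneg hP0.le (hcl0 x))) (by positivity : 0 ≤ δ / α)
    have h2 : δ / α * (-(P * clamp 0 R x ^ p) / lam - K * |σ * α * clamp (-R) R v|)
        = -(δ / α * P) * clamp 0 R x ^ p / lam - δ / α * (K * |σ * α * clamp (-R) R v|) := by ring
    rw [h2, hδP, neg_one_mul] at h1
    have h3 := hdrift v
    have h4 : G s x v = δ / α * (σ * g (r₀ + δ * s) (σ * (P * clamp 0 R x ^ p))
      (σ * α * clamp (-R) R v)) := by ring
    rw [h4]
    linarith
  have hGup : ∀ s x v, G s x v ≤ -clamp 0 R x ^ p / Lam + τ := fun s x v => by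
    have h1 := mul_le_mul_of_nonneg_left (hg.ge σ hσ (r₀ + δ * s) (P * clamp 0 R x ^ p)
      (σ * α * clamp (-R) R v) (mul_nonneg hP0.le (hcl0 x))) (by positivity : 0 ≤ δ / α)
    have h2 : δ / α * (-(P * clamp 0 R x ^ p) / Lam + K * |σ * α * clamp (-R) R v|)
        = -(δ / α * P) * clamp 0 R x ^ p / Lam + δ / α * (K * |σ * α * clamp (-R) R v|) := by ring
    rw [h2, hδP, neg_one_mul] at h1
    have h3 := hdrift v
    have h4 : G s x v = δ / α * (σ * g (r₀ + δ * s) (σ * (P * clamp 0 R x ^ p))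
      (σ * α * clamp (-R) R v)) := by ring
    rw [h4]
    linarith
  have hGcont : ∀ x v, Continuous fun t => G t x v := fun x v => by
    have : Continuous fun t : ℝ =>
        (r₀ + δ * t, σ * (P * clamp 0 R x ^ p), σ * α * clamp (-R) R v) := by fun_prop
    exact continuous_const.mul (hg.continuous.comp this)
  have hGB : ∀ t x v, |G t x v| ≤ R ^ p / lam + τ := fun t x v => by
    have h1 := hGlow t x v
    have h2 := hGup t x v
    have h3 : clamp 0 R x ^ p / lam ≤ R ^ p / lam := by
      have := hclR x
      gcongr
    have h4 : 0 ≤ clamp 0 R x ^ p / Lam := div_nonneg (hcl0 x) hLam.le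
    have h5 : 0 ≤ R ^ p / lam := by positivity
    rw [neg_div] at h1 h2
    rw [abs_le]
    constructor <;> linarith
  obtain ⟨N, hN⟩ : ∃ N, N = p * R ^ (p - 1) := ⟨_, rfl⟩
  have hN0 : 0 ≤ N := by rw [hN]; positivity
  have hGL : ∀ t x v x' v', |G t x v - G t x' v'|
      ≤ δ / α * C * (P * N + α) * (|x - x'| + |v - v'|) := fun t x v x' v' => by
    have h1 := hg.lipschitz (r₀ + δ * t) (σ * (P * clamp 0 R x ^ p)) (σ * α * clamp (-R) R v)
      (σ * (P * clamp 0 R x' ^ p)) (σ * α * clamp (-R) R v')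
    have h2 : |σ * (P * clamp 0 R x ^ p) - σ * (P * clamp 0 R x' ^ p)| ≤ P * N * |x - x'| := by
      rw [← mul_sub, ← mul_sub, abs_mul, abs_mul, hσabs, abs_of_pos hP0, one_mul, mul_assoc]
      gcongr
      refine (abs_rpow_sub_rpow_le hp.le ⟨le_clamp _ _ _, clamp_le hR.le _⟩
        ⟨le_clamp _ _ _, clamp_le hR.le _⟩).trans ?_
      rw [hN]
      have := abs_clamp_sub_clamp_le 0 R x x'
      gcongr
    have h3 : |σ * α * clamp (-R) R v - σ * α * clamp (-R) R v'| ≤ α * |v - v'| := by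
      rw [← mul_sub, abs_mul, abs_mul, hσabs, abs_of_pos hα0, one_mul]
      have := abs_clamp_sub_clamp_le (-R) R v v'
      gcongr
    have h4 : P * N * |x - x'| + α * |v - v'| ≤ (P * N + α) * (|x - x'| + |v - v'|) := by
      have := mul_nonneg (mul_nonneg hP0.le hN0) (abs_nonneg (v - v'))
      have := mul_nonneg hα0.le (abs_nonneg (x - x'))
      linarith
    simp only [G]
    rw [← mul_sub, abs_mul, abs_mul, hσabs, abs_of_pos (by positivity : 0 < δ / α), one_mul,
      mul_assoc (δ / α), mul_assoc (δ / α), mul_assoc C]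
    gcongr
    refine h1.trans ?_
    gcongr
    linarith
  obtain ⟨w, v, hw0, hv0, hw, hv⟩ := exists_second_order_solution hS
    (by positivity : 0 ≤ δ / α * C * (P * N + α)) hGcont hGB hGL 1
  obtain ⟨s₁, hs₁0, hs₁S, hws₁, hpos, hbox, hvs₁⟩ := hwave w v (fun s => G s (w s) (v s)) hw0 hv0
    hw hv (fun s _ => hGlow _ _ _) (fun s _ => hGup _ _ _)
  have hdiv : ∀ r ∈ Icc r₀ (r₀ + δ * s₁), (r - r₀) / δ ∈ Icc 0 s₁ := fun r hr =>
    ⟨div_nonneg (by linarith [hr.1]) hδ.le, by rw [div_le_iff₀ hδ]; linarith [hr.2]⟩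
  have hlin : ∀ r, HasDerivAt (fun t => (t - r₀) / δ) (1 / δ) r := fun r =>
    ((hasDerivAt_id r).sub_const r₀).div_const δ
  have hend : (r₀ + δ * s₁ - r₀) / δ = s₁ := by field_simp; ring
  refine ⟨fun r => σ * (α * δ) * w ((r - r₀) / δ), fun r => σ * α * v ((r - r₀) / δ),
    r₀ + δ * s₁, -α * v s₁, by linarith [mul_pos hδ hs₁0], ?_, by simp [hw0], by simp [hv0],
    fun r hr => ?_, fun r hr => ?_, ?_, fun r hr => ?_, ?_, ?_⟩
  · have : δ * s₁ ≤ δ * S := by gcongr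
    linarith
  · have hr' := hdiv r hr
    have := ((hw _ ⟨hr'.1, hr'.2.trans hs₁S⟩).comp r (hlin r)).const_mul (σ * (α * δ))
    refine this.congr_deriv ?_
    field_simp
  · have hr' := hdiv r hr
    obtain ⟨hb1, hb2, hb3⟩ := hbox _ hr'
    have := ((hv _ ⟨hr'.1, hr'.2.trans hs₁S⟩).comp r (hlin r)).const_mul (σ * α)
    refine this.congr_deriv ?_
    simp only [G]
    rw [clamp_eq_self hb1 hb2, clamp_eq_self (abs_le.1 hb3).1 (abs_le.1 hb3).2,
      abs_rpow_mul_self_of_sign hp0.ne' hσ (by positivity) hb1, ← hP, mul_div_cancel₀ _ hδ.ne',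
      add_sub_cancel]
    field_simp
    rw [sq, hσ2, one_mul]
  · simp only [hend, hws₁, mul_zero]
  · have hr' : (r - r₀) / δ ∈ Ioo 0 s₁ :=
      ⟨div_pos (by linarith [hr.1]) hδ, by rw [div_lt_iff₀ hδ]; linarith [hr.2]⟩
    have h1 := hpos _ hr'
    have h2 : σ * (σ * (α * δ) * w ((r - r₀) / δ)) = σ * σ * (α * δ * w ((r - r₀) / δ)) := by ring
    rw [h2, hσ2]
    positivity
  · nlinarith
  · simp only [hend]
    ring

/-- Iteration of `IsNormalForm.exists_nodal_interval`: completing `k` nodal intervals. -/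
theorem IsNormalForm.exists_nodal_intervals {lam Lam K C p : ℝ} {g : ℝ → ℝ → ℝ → ℝ}
    (hg : IsNormalForm lam Lam K C g) (hp : 1 < p) (hlam : 0 < lam) (hLam : 0 < Lam)
    (hK : 0 ≤ K) (hC : 0 ≤ C) (k : ℕ) :
    ∀ ε, 0 < ε → ∃ A, 0 < A ∧ ∀ r₀ σ α : ℝ, σ = 1 ∨ σ = -1 → A ≤ α →
      ∃ (u u' : ℝ → ℝ) (rr : ℕ → ℝ), rr 0 = r₀ ∧ r₀ ≤ rr k ∧ rr k ≤ r₀ + ε ∧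
        (∀ j < k, rr j < rr (j + 1)) ∧
        (∀ r ∈ Icc r₀ (rr k), HasDerivAt u (u' r) r) ∧
        (∀ r ∈ Icc r₀ (rr k), HasDerivAt u' (g r (|u r| ^ (p - 1) * u r) (u' r)) r) ∧
        u r₀ = 0 ∧ u' r₀ = σ * α ∧ (∀ j ≤ k, r₀ ≤ rr j ∧ u (rr j) = 0) ∧
        ∀ j < k, ∀ x ∈ Ioo (rr j) (rr (j + 1)), 0 < σ * (-1) ^ j * u x := by
  obtain ⟨c, hc, hnodal⟩ := hg.exists_nodal_interval hp hlam hLam hK hC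
  induction k with
  | zero =>
    intro ε hε
    obtain ⟨A, hA, h⟩ := hnodal ε hε
    refine ⟨A, hA, fun r₀ σ α hσ hα => ?_⟩
    obtain ⟨u, u', r₁, β, hr₁, -, hu0, hu'0, hu, hu', -⟩ := h r₀ σ α hσ hα
    exact ⟨u, u', fun _ => r₀, rfl, le_rfl, by linarith, by simp,
      fun r hr => hu r ⟨hr.1, hr.2.trans hr₁.le⟩, fun r hr => hu' r ⟨hr.1, hr.2.trans hr₁.le⟩,
      hu0, hu'0, fun _ _ => ⟨le_rfl, hu0⟩, by simp⟩
  | succ k ih =>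
    intro ε hε
    obtain ⟨A₁, hA₁, h₁⟩ := hnodal (ε / 2) (by linarith)
    obtain ⟨A₂, hA₂, h₂⟩ := ih (ε / 2) (by linarith)
    refine ⟨max A₁ (A₂ / c), lt_max_of_lt_left hA₁, fun r₀ σ α hσ hα => ?_⟩
    obtain ⟨u₁, u₁', r₁, β, hr₁, hr₁ε, hu₁0, hu₁'0, hu₁, hu₁', hu₁1, hu₁pos, hβ, hu₁'1⟩ :=
      h₁ r₀ σ α hσ ((le_max_left _ _).trans hα)
    have hA₂β : A₂ ≤ β := by
      have := (le_max_right _ _).trans hα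
      rw [div_le_iff₀ hc] at this
      linarith
    obtain ⟨u₂, u₂', rr, hrr0, hrrk, hrrε, hrr, hu₂, hu₂', hu₂0, hu₂'0, hu₂z, hu₂pos⟩ :=
      h₂ r₁ (-σ) β (by rcases hσ with rfl | rfl <;> simp) hA₂β
    have hueq : u₁ r₁ = u₂ r₁ := by rw [hu₁1, hu₂0]
    have hu'eq : u₁' r₁ = u₂' r₁ := by rw [hu₁'1, hu₂'0]
    set u : ℝ → ℝ := fun t => if t ≤ r₁ then u₁ t else u₂ t with hu
    set u' : ℝ → ℝ := fun t => if t ≤ r₁ then u₁' t else u₂' t with hu'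
    have hul : ∀ t, t ≤ r₁ → u t = u₁ t := fun t ht => if_pos ht
    have hul' : ∀ t, t ≤ r₁ → u' t = u₁' t := fun t ht => if_pos ht
    have hur : ∀ t, r₁ ≤ t → u t = u₂ t := fun t ht => by
      rcases ht.eq_or_lt with rfl | h
      · rw [hul _ le_rfl, hueq]
      · exact if_neg (not_le.2 h)
    have hur' : ∀ t, r₁ ≤ t → u' t = u₂' t := fun t ht => by
      rcases ht.eq_or_lt with rfl | h
      · rw [hul' _ le_rfl, hu'eq]
      · exact if_neg (not_le.2 h)
    refine ⟨u, u', fun j => Nat.casesOn j r₀ rr, rfl, hr₁.le.trans hrrk, by simp only; linarith,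
      ?_, fun r hr => ?_, fun r hr => ?_, ?_, ?_, ?_, ?_⟩
    · rintro (_ | j) hj
      · simpa [hrr0] using hr₁
      · exact hrr j (by omega)
    · refine hasDerivAt_ite_le (fun h => ?_) (fun h => ?_) hueq
      · rw [hul' r h]; exact hu₁ r ⟨hr.1, h⟩
      · rw [hur' r h]; exact hu₂ r ⟨h, hr.2⟩
    · refine hasDerivAt_ite_le (fun h => ?_) (fun h => ?_) hu'eq
      · rw [hul' r h, hul r h]; exact hu₁' r ⟨hr.1, h⟩
      · rw [hur' r h, hur r h]; exact hu₂' r ⟨h, hr.2⟩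
    · rw [hul _ hr₁.le, hu₁0]
    · rw [hul' _ hr₁.le, hu₁'0]
    · rintro (_ | j) hj
      · exact ⟨le_rfl, by rw [← hu₁0]; exact hul _ hr₁.le⟩
      · obtain ⟨h3, h4⟩ := hu₂z j (by omega)
        exact ⟨hr₁.le.trans h3, (hur _ h3).trans h4⟩
    · rintro (_ | j) hj x hx
      · have hx' : x ∈ Ioo r₀ r₁ := by simpa [hrr0] using hx
        rw [hul x hx'.2.le]
        simpa using hu₁pos x hx'
      · have hx' : x ∈ Ioo (rr j) (rr (j + 1)) := hx
        rw [hur x ((hu₂z j (by omega)).1.trans hx'.1.le), pow_succ]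
        have := hu₂pos j (by omega) x hx'
        linarith

/-- Proposition 4.1 (paper), quantitative form: for large initial slope `α`, the solution
of the radial Cauchy problem oscillates, completing `k` nodal intervals within `(a, a+ε]`. -/
theorem oscillating_solutions_for_large_slope
    (n : ℕ) (hn : 2 ≤ n) (lam Lam p : ℝ) (hlam : 0 < lam) (hlL : lam ≤ Lam) (hp : 1 < p)
    (F : ℝ → ℝ → ℝ → ℝ)
    (hFcont : Continuous fun x : ℝ × ℝ × ℝ => F x.1 x.2.1 x.2.2)
    (hF0 : ∀ r : ℝ, F r 0 0 = 0)
    (hFell : UnifElliptic n lam Lam F)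
    (a : ℝ) (ha : 0 < a) (k : ℕ) (hk : 1 ≤ k) (ε : ℝ) (hε : 0 < ε) :
    ∃ A : ℝ, 0 < A ∧ ∀ α : ℝ, A ≤ α →
      ∃ (u u' u'' : ℝ → ℝ) (rr : ℕ → ℝ),
        rr 0 = a ∧ rr k ≤ a + ε ∧ (∀ j < k, rr j < rr (j + 1)) ∧
        (∀ r ∈ Icc a (rr k), HasDerivAt u (u' r) r) ∧
        (∀ r ∈ Icc a (rr k), HasDerivAt u' (u'' r) r) ∧
        ContinuousOn u'' (Icc a (rr k)) ∧
        u a = 0 ∧ u' a = α ∧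
        (∀ r ∈ Ioo a (rr k), -F r (u'' r) (u' r / r) = |u r| ^ (p - 1) * u r) ∧
        (∀ j ≤ k, u (rr j) = 0) ∧
        (∀ j < k, ∀ x ∈ Ioo (rr j) (rr (j + 1)), 0 < (-1 : ℝ) ^ j * u x) := by
  obtain ⟨K, C, g, hK, hC, hg, hgF⟩ := hFell.exists_isNormalForm (by omega) hlam hlL hFcont hF0 ha
  obtain ⟨A, hA, h⟩ :=
    hg.exists_nodal_intervals hp hlam (hlam.trans_le hlL) hK hC k ε hε
  refine ⟨A, hA, fun α hα => ?_⟩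
  obtain ⟨u, u', rr, hrr0, -, hrrε, hrr, hu, hu', hu0, hu'0, huz, hupos⟩ := h a 1 α (Or.inl rfl) hα
  refine ⟨u, u', fun r => g r (|u r| ^ (p - 1) * u r) (u' r), rr, hrr0, hrrε, hrr, hu, hu', ?_,
    hu0, by simpa using hu'0, fun r hr => ?_, fun j hj => (huz j hj).2, fun j hj x hx => ?_⟩
  · have hcu : ContinuousOn u (Icc a (rr k)) := fun r hr =>
      (hu r hr).continuousAt.continuousWithinAt
    have hcu' : ContinuousOn u' (Icc a (rr k)) := fun r hr =>
      (hu' r hr).continuousAt.continuousWithinAt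
    have hpow : ContinuousOn (fun r => |u r| ^ (p - 1) * u r) (Icc a (rr k)) :=
      (hcu.abs.rpow_const fun _ _ => Or.inr (by linarith)).mul hcu
    exact hg.continuous.comp_continuousOn (continuousOn_id.prodMk (hpow.prodMk hcu'))
  · rw [hgF r _ _ hr.1.le, neg_neg]
  · simpa using hupos j hj x hx
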